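/- Let L be a compact subset of ℂ, let U ⊆ ℂ be open with L ⊆ U, let Ω = ℂ∖L, and let p ∈ {0,1,2,...} ∪ {∞}. Then the following are equivalent: (i) every f ∈ A^p(Ω ∪ {∞}) is constant (i.e. the p-continuous analytic capacity a_p(L) is zero); (ii) every f ∈ A^p(U∖L) has an extension F ∈ A^p(U) with F = f on U∖L. -/

import Mathlib

open Filter Set

/-- `f` belongs to `A^p(U)`: `f` is holomorphic on `U` and, for every integer
`j ≤ p`, the derivative `f⁽ʲ⁾` extends continuously to the closure of `U` in `ℂ`. -/
def MemAp (p : ℕ∞) (U : Set ℂ) (f : ℂ → ℂ) : Prop :=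
  DifferentiableOn ℂ f U ∧
    ∀ j : ℕ, (j : ℕ∞) ≤ p →
      ∃ g : ℂ → ℂ, ContinuousOn g (closure U) ∧ Set.EqOn g (iteratedDeriv j f) U

/-- `f` belongs to `A^p(Ω ∪ {∞})` for `Ω = ℂ \ L`: `f ∈ A^p(Ω)` and `f` has a finite
limit at infinity. -/
def MemApInf (p : ℕ∞) (L : Set ℂ) (f : ℂ → ℂ) : Prop :=
  MemAp p Lᶜ f ∧ ∃ c : ℂ, Tendsto f (cocompact ℂ) (nhds c)

/-!
A smooth cutoff and the Cauchy transform, which solves `∂u/∂z̄ = v`, split a holomorphic `f` on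
`U \ L` as `f = g + h` with `g` holomorphic on `U` and `h` holomorphic on `ℂ \ L`, vanishing at
infinity. Membership in `A^p` is a condition at the boundary only, and near `∂U` the function `h`
is holomorphic, near `∂L` the function `g` is; so if `f` is of class `A^p`, then so are `g` and `h`.
When every function in `A^p(Ω ∪ {∞})` is constant, `h` vanishes and `g` extends `f`.
Conversely, an extension across `L` of `f ∈ A^p(Ω ∪ {∞})` glues with `f` to an entire function with
a limit at infinity, which is constant by Liouville's theorem.
-/

open MeasureTheory Complex
open scoped Real Topology ComplexConjugate

theorem exists_contDiff_eventuallyEq_one {V : Type*} [NormedAddCommGroup V] [NormedSpace ℝ V]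
    [FiniteDimensional ℝ V] (𝕜 : Type*) [RCLike 𝕜] {K U : Set V} (hK : IsCompact K)
    (hU : IsOpen U) (hKU : K ⊆ U) (n : ℕ∞) :
    ∃ χ : V → 𝕜, ContDiff ℝ n χ ∧ HasCompactSupport χ ∧ tsupport χ ⊆ U ∧ χ =ᶠ[𝓝ˢ K] 1 := by
  obtain ⟨K', hK', hKK', hK'U⟩ := exists_compact_between hK hU hKU
  obtain ⟨χ, hχ_one, hχ_zero, -⟩ := exists_contMDiffMap_one_nhds_of_subset_interior
    (n := n) (modelWithCornersSelf ℝ V) hK.isClosed hKK'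
  have hsupp : tsupport (fun x => (χ x : 𝕜)) ⊆ K' :=
    closure_minimal (Function.support_subset_iff'.2 fun x hx => by simp [hχ_zero x hx])
      hK'.isClosed
  refine ⟨fun x => (χ x : 𝕜), (RCLike.ofRealCLM (K := 𝕜)).contDiff.comp χ.contMDiff.contDiff,
    hK'.of_isClosed_subset (isClosed_tsupport _) hsupp, hsupp.trans hK'U, ?_⟩
  filter_upwards [hχ_one] with x hx
  simp [hx]

theorem tsupport_one_sub_subset_compl {X R : Type*} [TopologicalSpace X] [AddGroup R] [One R]
    {χ : X → R} {L : Set X} (hχ : χ =ᶠ[𝓝ˢ L] 1) : tsupport (fun x => 1 - χ x) ⊆ Lᶜ :=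
  fun _ hx hxL => notMem_tsupport_iff_eventuallyEq.2
    ((hχ.filter_mono (nhds_le_nhdsSet hxL)).mono fun y hy => by simp [hy]) hx

theorem integral_Ioi_fderiv_smul {V E : Type*} [NormedAddCommGroup V] [NormedSpace ℝ V]
    [NormedAddCommGroup E] [NormedSpace ℝ E] [CompleteSpace E] {φ : V → E} (hφ : ContDiff ℝ 1 φ)
    (hφc : HasCompactSupport φ) {w : V} (hw : w ≠ 0) :
    ∫ r in Ioi (0 : ℝ), fderiv ℝ φ (r • w) w = -φ 0 := by
  have hderiv (r : ℝ) : HasDerivAt (fun r : ℝ => φ (r • w)) (fderiv ℝ φ (r • w) w) r := by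
    simpa [Function.comp_def] using
      (hφ.differentiable one_ne_zero (r • w)).hasFDerivAt.comp_hasDerivAt r
        ((hasDerivAt_id r).smul_const w)
  have hray : HasCompactSupport fun r : ℝ => φ (r • w) :=
    hφc.comp_isClosedEmbedding (isClosedEmbedding_smul_left hw)
  simpa [(hderiv _).deriv] using
    hray.integral_Ioi_deriv_eq (hφ.fun_comp (contDiff_id.fun_smul contDiff_const)) 0

theorem integral_fderiv_circleMap {E : Type*} [NormedAddCommGroup E] [NormedSpace ℝ E]
    [CompleteSpace E] {φ : ℂ → E} (hφ : ContDiff ℝ 1 φ) (c : ℂ) (r : ℝ) :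
    ∫ θ in -π..π, fderiv ℝ φ (circleMap c r θ) (circleMap 0 r θ * I) = 0 := by
  have hcont : Continuous fun θ => fderiv ℝ φ (circleMap c r θ) (circleMap 0 r θ * I) :=
    ((hφ.continuous_fderiv one_ne_zero).comp (by fun_prop)).clm_apply (by fun_prop)
  rw [intervalIntegral.integral_eq_sub_of_hasDerivAt (f := φ ∘ circleMap c r)
    (fun θ _ => (hφ.differentiable one_ne_zero _).hasFDerivAt.comp_hasDerivAt θ
      (hasDerivAt_circleMap c r θ)) (hcont.intervalIntegrable _ _), sub_eq_zero]
  simpa [two_mul] using congrArg φ (periodic_circleMap c r (-π))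

theorem integrableOn_polarCoord_target {E : Type*} [NormedAddCommGroup E] [NormedSpace ℝ E]
    {D : ℂ → ℂ →L[ℝ] E} (hD : Continuous D) (hDc : HasCompactSupport D) {w : ℝ → ℂ}
    (hw : Continuous w) :
    IntegrableOn (fun p : ℝ × ℝ => D (circleMap 0 p.1 p.2) (w p.2)) polarCoord.target := by
  obtain ⟨R, hR⟩ := hDc.isCompact.isBounded.exists_norm_le
  have hcircle : Continuous fun p : ℝ × ℝ => circleMap 0 p.1 p.2 := by
    unfold circleMap
    fun_prop
  have hcont : Continuous fun p : ℝ × ℝ => D (circleMap 0 p.1 p.2) (w p.2) :=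
    (hD.comp hcircle).clm_apply (by fun_prop)
  have hcompact : IsCompact (Icc (-R) R ×ˢ Icc (-π) π) := isCompact_Icc.prod isCompact_Icc
  refine (hcont.continuousOn.integrableOn_compact hcompact).of_forall_sdiff_eq_zero
    polarCoord.open_target.measurableSet ?_
  rintro ⟨r, θ⟩ ⟨⟨-, hθ⟩, hrθ⟩
  have hr : R < ‖circleMap 0 r θ‖ := by
    rw [norm_circleMap_zero]
    exact lt_of_not_ge fun h => hrθ ⟨abs_le.1 h, Ioo_subset_Icc_self hθ⟩
  have hDzero : D (circleMap 0 r θ) = 0 :=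
    image_eq_zero_of_notMem_tsupport fun h => hr.not_ge (hR _ h)
  simp [hDzero]

variable {E : Type*} [NormedAddCommGroup E] [NormedSpace ℂ E]

/-- The Wirtinger derivative `∂f/∂z̄ = (∂f/∂x + i ∂f/∂y) / 2`, whose vanishing expresses
holomorphy; it has a junk value where `f` is not real differentiable. -/
noncomputable def dbar (f : ℂ → E) (z : ℂ) : E :=
  (2⁻¹ : ℂ) • (fderiv ℝ f z 1 + I • fderiv ℝ f z I)

theorem differentiableAt_complex_iff_dbar_eq_zero {f : ℂ → E} {z : ℂ} :
    DifferentiableAt ℂ f z ↔ DifferentiableAt ℝ f z ∧ dbar f z = 0 := by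
  rw [differentiableAt_complex_iff_differentiableAt_real, dbar,
    smul_eq_zero_iff_right (inv_ne_zero two_ne_zero), ← smul_eq_zero_iff_right I_ne_zero,
    smul_add, smul_smul, I_mul_I, neg_one_smul, add_neg_eq_zero, eq_comm (a := fderiv ℝ f z I)]

theorem dbar_neg (f : ℂ → E) (z : ℂ) : dbar (-f) z = -dbar f z := by
  simp only [dbar, fderiv_neg, neg_apply]
  module

theorem dbar_const_sub (c : E) (f : ℂ → E) (z : ℂ) : dbar (fun w => c - f w) z = -dbar f z := by
  simp only [dbar, fderiv_const_sub, neg_apply]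
  module

theorem dbar_sub {f g : ℂ → E} {z : ℂ} (hf : DifferentiableAt ℝ f z)
    (hg : DifferentiableAt ℝ g z) : dbar (fun w => f w - g w) z = dbar f z - dbar g z := by
  simp only [dbar, fderiv_fun_sub hf hg, sub_apply]
  module

theorem dbar_smul {χ : ℂ → ℂ} {f : ℂ → E} {z : ℂ} (hχ : DifferentiableAt ℝ χ z)
    (hf : DifferentiableAt ℝ f z) :
    dbar (fun w => χ w • f w) z = χ z • dbar f z + dbar χ z • f z := by
  simp only [dbar, fderiv_fun_smul hχ hf, add_apply, smul_apply,
    ContinuousLinearMap.smulRight_apply, smul_eq_mul]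
  module

theorem dbar_comp_const_sub {f : ℂ → E} (hf : Differentiable ℝ f) (a z : ℂ) :
    dbar (fun w => f (a - w)) z = -dbar f (a - z) := by
  have hderiv : HasFDerivAt (fun w => f (a - w))
      ((fderiv ℝ f (a - z)).comp (-ContinuousLinearMap.id ℝ ℂ)) z :=
    (hf (a - z)).hasFDerivAt.comp z ((hasFDerivAt_id z).const_sub a)
  simp only [dbar, hderiv.fderiv, ContinuousLinearMap.comp_apply, neg_apply,
    ContinuousLinearMap.id_apply, map_neg]
  module

theorem tsupport_dbar_subset (f : ℂ → E) : tsupport (dbar f) ⊆ tsupport f :=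
  closure_minimal (fun _ hz => by_contra fun hzf => hz <| by
    simp [dbar, fderiv_of_notMem_tsupport ℝ hzf]) (isClosed_tsupport f)

theorem tsupport_dbar_subset_tsupport_const_sub (c : E) (f : ℂ → E) :
    tsupport (dbar f) ⊆ tsupport fun z => c - f z := by
  have hdbar : dbar (fun z => c - f z) = -dbar f := funext (dbar_const_sub c f)
  simpa only [hdbar, tsupport_neg] using tsupport_dbar_subset fun z => c - f z

theorem contDiff_dbar {f : ℂ → E} {m n : WithTop ℕ∞} (hf : ContDiff ℝ n f)
    (hmn : m + 1 ≤ n) : ContDiff ℝ m (dbar f) := by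
  have hfderiv := hf.fderiv_right hmn
  exact ((hfderiv.clm_apply contDiff_const).add
    ((hfderiv.clm_apply contDiff_const).const_smul I)).const_smul (2⁻¹ : ℂ)

theorem apply_add_I_smul_apply_mul_I (D : ℂ →L[ℝ] E) (w : ℂ) :
    D w + I • D (w * I) = conj w • (D 1 + I • D I) := by
  have hD (z : ℂ) : D z = (z.re : ℂ) • D 1 + (z.im : ℂ) • D I := by
    simp only [coe_smul, ← map_smul, ← map_add]
    congr 1
    apply Complex.ext <;> simp
  have hw : conj w = w.re - w.im * I := by apply Complex.ext <;> simp
  rw [hD w, hD (w * I), hw, mul_I_re, mul_I_im, ofReal_neg]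
  linear_combination (norm := module) ((w.im : ℂ) * I_mul_I) • D I

/-- The Cauchy kernel `1 / (π z)`, the fundamental solution of `∂/∂z̄`. -/
noncomputable def cauchyKernel (z : ℂ) : ℂ := (π * z)⁻¹

theorem locallyIntegrable_cauchyKernel : LocallyIntegrable cauchyKernel := by
  refine locallyIntegrable_of_norm_le_rpow (C := π⁻¹) (α := 1) (by simp) (by simp)
    (ae_of_all _ fun z => ?_) (by unfold cauchyKernel; fun_prop)
  simp [cauchyKernel, Real.rpow_neg_one, abs_of_pos Real.pi_pos, mul_comm]

/-- In polar coordinates the Jacobian cancels the singularity of the kernel; what remains is a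
radial term, integrated along rays to `-φ 0`, and an angular term, integrated around circles to
`0`. -/
theorem smul_cauchyKernel_smul_dbar_circleMap (φ : ℂ → E) {r : ℝ} (hr : r ≠ 0) (θ : ℝ) :
    r • cauchyKernel (circleMap 0 r θ) • dbar φ (circleMap 0 r θ) =
      (2 * π)⁻¹ • (fderiv ℝ φ (circleMap 0 r θ) (exp (θ * I)) +
        I • fderiv ℝ φ (circleMap 0 r θ) (exp (θ * I) * I)) := by
  have hr' : (r : ℂ) ≠ 0 := ofReal_ne_zero.2 hr
  have hconj : conj (exp (θ * I)) = (exp (θ * I))⁻¹ :=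
    (inv_eq_conj (norm_exp_ofReal_mul_I θ)).symm
  rw [apply_add_I_smul_apply_mul_I, hconj, dbar, ← coe_smul, ← coe_smul]
  simp only [smul_smul, cauchyKernel, circleMap_zero]
  congr 1
  push_cast
  field_simp

/-- The Cauchy transform of `v`: its convolution with `cauchyKernel`, which solves `∂u/∂z̄ = v`
when `v` is compactly supported and continuously differentiable. -/
noncomputable def cauchyTransform (v : ℂ → E) : ℂ → E :=
  convolution cauchyKernel v (ContinuousLinearMap.lsmul ℝ ℂ) volume

theorem cauchyTransform_apply (v : ℂ → E) (z : ℂ) :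
    cauchyTransform v z = ∫ t, cauchyKernel t • v (z - t) := rfl

theorem integrable_cauchyKernel_smul {v : ℂ → E} (hv : Continuous v) (hvc : HasCompactSupport v)
    (z : ℂ) : Integrable fun t => cauchyKernel t • v (z - t) :=
  hvc.convolutionExists_right (ContinuousLinearMap.lsmul ℝ ℂ) locallyIntegrable_cauchyKernel hv z

theorem differentiable_cauchyTransform {v : ℂ → E} (hv : ContDiff ℝ 1 v)
    (hvc : HasCompactSupport v) : Differentiable ℝ (cauchyTransform v) := fun z =>
  (hvc.hasFDerivAt_convolution_right _ locallyIntegrable_cauchyKernel hv z).differentiableAt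

theorem fderiv_cauchyTransform_apply {v : ℂ → E} (hv : ContDiff ℝ 1 v)
    (hvc : HasCompactSupport v) (z w : ℂ) :
    fderiv ℝ (cauchyTransform v) z w = cauchyTransform (fun t => fderiv ℝ v t w) z := by
  rw [cauchyTransform,
    (hvc.hasFDerivAt_convolution_right _ locallyIntegrable_cauchyKernel hv z).fderiv,
    convolution_precompR_apply _ locallyIntegrable_cauchyKernel (hvc.fderiv ℝ)
      (hv.continuous_fderiv one_ne_zero)]
  rfl

theorem norm_cauchyTransform_le {v : ℂ → E} (hv : Integrable v) {R : ℝ}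
    (hR : ∀ t, v t ≠ 0 → ‖t‖ ≤ R) {z : ℂ} (hz : R < ‖z‖) :
    ‖cauchyTransform v z‖ ≤ (π * (‖z‖ - R))⁻¹ * ∫ t, ‖v t‖ := by
  rw [← integral_sub_left_eq_self (fun t => ‖v t‖) volume z, ← integral_const_mul]
  refine norm_integral_le_of_norm_le ((hv.norm.comp_sub_left z).const_mul _)
    (ae_of_all _ fun t => ?_)
  rw [ContinuousLinearMap.lsmul_apply, norm_smul, cauchyKernel, norm_inv, norm_mul, norm_real,
    Real.norm_of_nonneg Real.pi_pos.le]
  obtain h | h := eq_or_ne (v (z - t)) 0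
  · simp [h]
  · have : 0 < ‖z‖ - R := sub_pos.2 hz
    have ht : ‖z‖ - R ≤ ‖t‖ := by linarith [norm_sub_norm_le z t, hR _ h]
    gcongr

theorem tendsto_cauchyTransform_cocompact {v : ℂ → E} (hv : Integrable v)
    (hvc : HasCompactSupport v) : Tendsto (cauchyTransform v) (cocompact ℂ) (𝓝 0) := by
  obtain ⟨R, hR⟩ := hvc.isCompact.isBounded.exists_norm_le
  have hnorm : Tendsto (fun z : ℂ => ‖z‖) (cocompact ℂ) atTop := tendsto_norm_cocompact_atTop
  have hbound : Tendsto (fun z : ℂ => (π * (‖z‖ - R))⁻¹ * ∫ t, ‖v t‖) (cocompact ℂ) (𝓝 0) := by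
    rw [← zero_mul (∫ t, ‖v t‖)]
    exact (((tendsto_atTop_add_const_right _ (-R) hnorm).const_mul_atTop
      Real.pi_pos).inv_tendsto_atTop).mul_const _
  refine squeeze_zero_norm' ?_ hbound
  filter_upwards [hnorm.eventually_gt_atTop R] with z hz
  exact norm_cauchyTransform_le hv (fun t ht => hR t (subset_tsupport v ht)) hz

theorem differentiableAt_smul_sub {χ : ℂ → ℂ} {f u : ℂ → E} {z : ℂ}
    (hχ : DifferentiableAt ℝ χ z) (hf : z ∈ tsupport χ → DifferentiableAt ℂ f z)
    (hu : DifferentiableAt ℝ u z) (hdu : dbar u z = dbar χ z • f z) :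
    DifferentiableAt ℂ (fun w => χ w • f w - u w) z := by
  by_cases hz : z ∈ tsupport χ
  · obtain ⟨hf, hdf⟩ := differentiableAt_complex_iff_dbar_eq_zero.1 (hf hz)
    refine differentiableAt_complex_iff_dbar_eq_zero.2 ⟨(hχ.fun_smul hf).fun_sub hu, ?_⟩
    rw [dbar_sub (hχ.fun_smul hf) hu, dbar_smul hχ hf, hdf, hdu, smul_zero, zero_add, sub_self]
  · have hdχ : dbar χ z = 0 :=
      image_eq_zero_of_notMem_tsupport fun h => hz (tsupport_dbar_subset χ h)
    have hu' : DifferentiableAt ℂ u z :=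
      differentiableAt_complex_iff_dbar_eq_zero.2 ⟨hu, by rw [hdu, hdχ, zero_smul]⟩
    refine hu'.neg.congr_of_eventuallyEq ?_
    filter_upwards [notMem_tsupport_iff_eventuallyEq.1 hz] with w hw
    simp [hw]

section Complete

variable [CompleteSpace E]

theorem contDiff_smul_of_tsupport_subset {b : ℂ → ℂ} {f : ℂ → E} {W : Set ℂ} {n : WithTop ℕ∞}
    (hb : ContDiff ℝ n b) (hW : IsOpen W) (hf : DifferentiableOn ℂ f W) (hbW : tsupport b ⊆ W) :
    ContDiff ℝ n fun z => b z • f z := by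
  refine contDiff_iff_contDiffAt.2 fun z => ?_
  by_cases hz : z ∈ tsupport b
  · have hfz := (hf.analyticAt (hW.mem_nhds (hbW hz))).contDiffAt (n := n)
    exact hb.contDiffAt.smul (hfz.restrict_scalars ℝ)
  · refine contDiffAt_const (c := 0) |>.congr_of_eventuallyEq ?_
    filter_upwards [notMem_tsupport_iff_eventuallyEq.1 hz] with w hw
    simp [hw]

theorem integral_polarCoord_target_fderiv_radial {φ : ℂ → E} (hφ : ContDiff ℝ 1 φ)
    (hφc : HasCompactSupport φ) :
    ∫ p in polarCoord.target, fderiv ℝ φ (circleMap 0 p.1 p.2) (exp (p.2 * I)) =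
      -(2 * π) • φ 0 := by
  have hint := integrableOn_polarCoord_target (hφ.continuous_fderiv one_ne_zero)
    (hφc.fderiv ℝ) (w := fun θ => exp (θ * I)) (by fun_prop)
  have hradial (θ : ℝ) :
      ∫ r in Ioi (0 : ℝ), fderiv ℝ φ (circleMap 0 r θ) (exp (θ * I)) = -φ 0 := by
    simpa only [circleMap_zero, real_smul] using
      integral_Ioi_fderiv_smul hφ hφc (exp_ne_zero (θ * I))
  rw [polarCoord_target, Measure.volume_eq_prod] at hint ⊢
  rw [IntegrableOn, ← Measure.prod_restrict] at hint
  rw [← Measure.prod_restrict, integral_prod_symm _ hint]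
  simp only [hradial, setIntegral_const,
    Real.volume_real_Ioo_of_le (by linarith [Real.pi_pos] : -π ≤ π)]
  module

theorem integral_polarCoord_target_fderiv_angular {φ : ℂ → E} (hφ : ContDiff ℝ 1 φ)
    (hφc : HasCompactSupport φ) :
    ∫ p in polarCoord.target, fderiv ℝ φ (circleMap 0 p.1 p.2) (exp (p.2 * I) * I) = 0 := by
  have hint := integrableOn_polarCoord_target (hφ.continuous_fderiv one_ne_zero)
    (hφc.fderiv ℝ) (w := fun θ => exp (θ * I) * I) (by fun_prop)
  rw [polarCoord_target, Measure.volume_eq_prod] at hint ⊢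
  rw [setIntegral_prod _ hint]
  refine setIntegral_eq_zero_of_forall_eq_zero fun r (hr : 0 < r) => ?_
  have hcircle := integral_fderiv_circleMap hφ 0 r
  simp only [circleMap_zero, ← real_smul, smul_mul_assoc, map_smul,
    intervalIntegral.integral_smul, smul_eq_zero_iff_right hr.ne'] at hcircle
  rw [← integral_Ioc_eq_integral_Ioo,
    ← intervalIntegral.integral_of_le (by linarith [Real.pi_pos])]
  simpa only [circleMap_zero, ← real_smul] using hcircle

theorem integral_cauchyKernel_smul_dbar {φ : ℂ → E} (hφ : ContDiff ℝ 1 φ)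
    (hφc : HasCompactSupport φ) : ∫ z, cauchyKernel z • dbar φ z = -φ 0 := by
  have hint {w : ℝ → ℂ} (hw : Continuous w) :=
    integrableOn_polarCoord_target (hφ.continuous_fderiv one_ne_zero) (hφc.fderiv ℝ) hw
  have hradial := hint (w := fun θ => exp (θ * I)) (by fun_prop)
  have hangular := hint (w := fun θ => exp (θ * I) * I) (by fun_prop)
  calc ∫ z, cauchyKernel z • dbar φ z
      = ∫ p in polarCoord.target, (2 * π)⁻¹ •
          (fderiv ℝ φ (circleMap 0 p.1 p.2) (exp (p.2 * I)) +
            I • fderiv ℝ φ (circleMap 0 p.1 p.2) (exp (p.2 * I) * I)) := by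
        rw [← Complex.integral_comp_polarCoord_symm]
        refine setIntegral_congr_fun polarCoord.open_target.measurableSet fun p hp => ?_
        have hp' : Complex.polarCoord.symm p = circleMap 0 p.1 p.2 := by
          rw [Complex.polarCoord_symm_apply, circleMap_zero, exp_mul_I, ofReal_cos, ofReal_sin]
        simp only [hp']
        exact smul_cauchyKernel_smul_dbar_circleMap φ hp.1.ne' p.2
    _ = (2 * π)⁻¹ • (-(2 * π) • φ 0 + I • 0) := by
        rw [integral_smul, integral_add hradial (hangular.fun_smul I), integral_smul,
          integral_polarCoord_target_fderiv_radial hφ hφc,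
          integral_polarCoord_target_fderiv_angular hφ hφc]
    _ = -φ 0 := by
        rw [smul_zero, add_zero, smul_smul, mul_neg, inv_mul_cancel₀ Real.two_pi_pos.ne',
          neg_one_smul]

theorem dbar_cauchyTransform {v : ℂ → E} (hv : ContDiff ℝ 1 v) (hvc : HasCompactSupport v)
    (z : ℂ) : dbar (cauchyTransform v) z = v z := by
  have hint (w : ℂ) : Integrable fun t => cauchyKernel t • fderiv ℝ v (z - t) w :=
    integrable_cauchyKernel_smul ((hv.continuous_fderiv one_ne_zero).clm_apply continuous_const)
      (hvc.fderiv_apply ℝ w) z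
  calc dbar (cauchyTransform v) z = ∫ t, cauchyKernel t • dbar v (z - t) := by
        rw [dbar, fderiv_cauchyTransform_apply hv hvc, fderiv_cauchyTransform_apply hv hvc,
          cauchyTransform_apply, cauchyTransform_apply, ← integral_smul,
          ← integral_add (hint 1) ((hint I).fun_smul I), ← integral_smul]
        refine integral_congr_ae (ae_of_all _ fun t => ?_)
        simp only [dbar]
        module
    _ = -∫ t, cauchyKernel t • dbar (fun w => v (z - w)) t := by
        simp only [dbar_comp_const_sub (hv.differentiable one_ne_zero), smul_neg, integral_neg,
          neg_neg]
    _ = v z := by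
        rw [integral_cauchyKernel_smul_dbar (φ := fun w => v (z - w))
          (hv.comp (contDiff_const.sub contDiff_id))
          (hvc.comp_homeomorph (Homeomorph.subLeft z)), neg_neg, sub_zero]

theorem exists_differentiableOn_decomposition {U L : Set ℂ} (hL : IsCompact L) (hU : IsOpen U)
    (hLU : L ⊆ U) {f : ℂ → E} (hf : DifferentiableOn ℂ f (U \ L)) :
    ∃ g h : ℂ → E, DifferentiableOn ℂ g U ∧ DifferentiableOn ℂ h Lᶜ ∧
      Tendsto h (cocompact ℂ) (𝓝 0) ∧ f = g + h := by
  obtain ⟨χ, hχ, hχc, hχU, hχL⟩ := exists_contDiff_eventuallyEq_one ℂ hL hU hLU 2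
  have hχd : Differentiable ℝ χ := hχ.differentiable two_ne_zero
  have hLχ : tsupport (fun z => 1 - χ z) ⊆ Lᶜ := tsupport_one_sub_subset_compl hχL
  have hdχ : tsupport (dbar χ) ⊆ U \ L := subset_inter ((tsupport_dbar_subset χ).trans hχU)
    ((tsupport_dbar_subset_tsupport_const_sub 1 χ).trans hLχ)
  set v : ℂ → E := fun z => dbar χ z • f z
  have hW : IsOpen (U \ L) := hU.sdiff hL.isClosed
  have hv : ContDiff ℝ 1 v := contDiff_smul_of_tsupport_subset (contDiff_dbar hχ le_rfl) hW hf hdχ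
  have hvc : HasCompactSupport v := HasCompactSupport.smul_right
    (hχc.of_isClosed_subset (isClosed_tsupport _) (tsupport_dbar_subset χ))
  have hu := differentiable_cauchyTransform hv hvc
  -- On `U \ L`, `χ f` and `(1 - χ) f` have `∂/∂z̄` equal to `±v`; the Cauchy transform cancels it.
  refine ⟨fun z => (1 - χ z) • f z - -cauchyTransform v z,
    fun z => χ z • f z - cauchyTransform v z, fun z hz => ?_, fun z hz => ?_, ?_, ?_⟩
  · refine (differentiableAt_smul_sub ((hχd z).const_sub 1)
      (fun h => hf.differentiableAt (hW.mem_nhds ⟨hz, hLχ h⟩)) (hu z).neg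
      ?_).differentiableWithinAt
    rw [dbar_neg, dbar_const_sub, dbar_cauchyTransform hv hvc, neg_smul]
  · exact (differentiableAt_smul_sub (hχd z)
      (fun h => hf.differentiableAt (hW.mem_nhds ⟨hχU h, hz⟩)) (hu z)
      (dbar_cauchyTransform hv hvc z)).differentiableWithinAt
  · have hlim := (tendsto_cauchyTransform_cocompact
      (hv.continuous.integrable_of_hasCompactSupport hvc) hvc).neg
    rw [neg_zero] at hlim
    refine hlim.congr' ?_
    filter_upwards [hχc.compl_mem_cocompact] with z hz
    simp [image_eq_zero_of_notMem_tsupport hz]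
  · ext z
    simp only [Pi.add_apply]
    module

theorem continuousOn_iteratedDeriv_of_isOpen {V : Set ℂ} (hV : IsOpen V) {f : ℂ → E}
    (hf : DifferentiableOn ℂ f V) (j : ℕ) : ContinuousOn (iteratedDeriv j f) V := by
  rw [iteratedDeriv_eq_iterate]
  exact ((hf.analyticOnNhd hV).iterated_deriv j).continuousOn

end Complete

theorem eq_of_tendsto_of_eqOn_diff {U L : Set ℂ} (hL : IsCompact L) (hU : IsOpen U)
    (hLU : L ⊆ U) {f F : ℂ → E} {c : E} (hf : DifferentiableOn ℂ f Lᶜ)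
    (hc : Tendsto f (cocompact ℂ) (𝓝 c)) (hF : DifferentiableOn ℂ F U)
    (hFf : EqOn F f (U \ L)) {z : ℂ} (hz : z ∈ Lᶜ) : f z = c := by
  classical
  set G : ℂ → E := L.piecewise F f
  have hGf : EqOn G f Lᶜ := piecewise_eqOn_compl L F f
  have hGF : EqOn G F U := fun w hw => by
    by_cases hwL : w ∈ L
    · exact piecewise_eq_of_mem _ _ _ hwL
    · exact (hGf hwL).trans (hFf ⟨hw, hwL⟩).symm
  have hG : Differentiable ℂ G := fun w => by
    by_cases hwL : w ∈ L
    · exact (hF.congr hGF).differentiableAt (hU.mem_nhds (hLU hwL))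
    · exact (hf.congr hGf).differentiableAt (hL.isClosed.isOpen_compl.mem_nhds hwL)
  have hGc : Tendsto G (cocompact ℂ) (𝓝 c) :=
    hc.congr' (hGf.symm.eventuallyEq_of_mem hL.compl_mem_cocompact)
  rw [← hGf hz, hG.apply_eq_of_tendsto_cocompact z hGc]

theorem MemAp.mono {p : ℕ∞} {V W : Set ℂ} {f : ℂ → ℂ} (hf : MemAp p W f) (hVW : V ⊆ W) :
    MemAp p V f := by
  refine ⟨hf.1.mono hVW, fun j hj => ?_⟩
  obtain ⟨g, hg, hgf⟩ := hf.2 j hj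
  exact ⟨g, hg.mono (closure_mono hVW), hgf.mono hVW⟩

theorem MemAp.exists_tendsto {p : ℕ∞} {V : Set ℂ} {f : ℂ → ℂ} (hf : MemAp p V f) {j : ℕ}
    (hj : (j : ℕ∞) ≤ p) {z : ℂ} (hz : z ∈ closure V) :
    ∃ w, Tendsto (iteratedDeriv j f) (𝓝[V] z) (𝓝 w) := by
  obtain ⟨g, hg, hgf⟩ := hf.2 j hj
  exact ⟨g z, ((hg z hz).mono_left (nhdsWithin_mono z subset_closure)).congr'
    (hgf.eventuallyEq_of_mem self_mem_nhdsWithin)⟩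

theorem memAp_of_tendsto_frontier {p : ℕ∞} {V : Set ℂ} {f : ℂ → ℂ} (hV : IsOpen V)
    (hf : DifferentiableOn ℂ f V)
    (hlim : ∀ j : ℕ, (j : ℕ∞) ≤ p → ∀ z ∈ frontier V,
      ∃ w, Tendsto (iteratedDeriv j f) (𝓝[V] z) (𝓝 w)) : MemAp p V f := by
  refine ⟨hf, fun j hj => ?_⟩
  have hcont := continuousOn_iteratedDeriv_of_isOpen hV hf j
  refine ⟨extendFrom V (iteratedDeriv j f), continuousOn_extendFrom subset_rfl fun z hz => ?_,
    fun z hz => extendFrom_eq (subset_closure hz) (hcont z hz)⟩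
  by_cases hzV : z ∈ V
  · exact ⟨_, hcont z hzV⟩
  · exact hlim j hj z (hV.frontier_eq ▸ ⟨hz, hzV⟩)

theorem MemAp.of_eqOn_add {p : ℕ∞} {V W : Set ℂ} {f g h : ℂ → ℂ} (hf : MemAp p (V ∩ W) f)
    (hV : IsOpen V) (hW : IsOpen W) (hWV : frontier W ⊆ V) (hg : DifferentiableOn ℂ g V)
    (hh : DifferentiableOn ℂ h W) (hfgh : EqOn f (g + h) (V ∩ W)) : MemAp p W h := by
  refine memAp_of_tendsto_frontier hW hh fun j hj z hz => ?_
  have hzV := hWV hz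
  obtain ⟨w, hw⟩ := hf.exists_tendsto hj (hV.inter_closure ⟨hzV, frontier_subset_closure hz⟩)
  have hnhds : 𝓝[V ∩ W] z = 𝓝[W] z := by
    rw [inter_comm, nhdsWithin_inter_of_mem' (mem_nhdsWithin_of_mem_nhds (hV.mem_nhds hzV))]
  have hgz := (continuousOn_iteratedDeriv_of_isOpen hV hg j).continuousAt (hV.mem_nhds hzV)
  refine ⟨w - iteratedDeriv j g z,
    ((hnhds ▸ hw).sub (hgz.tendsto.mono_left nhdsWithin_le_nhds)).congr' ?_⟩
  filter_upwards [hnhds ▸ self_mem_nhdsWithin] with x (hx : x ∈ V ∩ W)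
  have hdiff := (hV.inter hW).mem_nhds hx
  rw [(hfgh.eventuallyEq_of_mem hdiff).iteratedDeriv_eq,
    iteratedDeriv_add (hg.analyticAt (hV.mem_nhds hx.1)).contDiffAt
      (hh.analyticAt (hW.mem_nhds hx.2)).contDiffAt, add_sub_cancel_left]

theorem MemAp.exists_decomposition {p : ℕ∞} {U L : Set ℂ} {f : ℂ → ℂ} (hf : MemAp p (U \ L) f)
    (hL : IsCompact L) (hU : IsOpen U) (hLU : L ⊆ U) :
    ∃ g h : ℂ → ℂ, MemAp p U g ∧ MemAp p Lᶜ h ∧ Tendsto h (cocompact ℂ) (𝓝 0) ∧ f = g + h := by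
  obtain ⟨g, h, hg, hh, hlim, hfgh⟩ := exists_differentiableOn_decomposition hL hU hLU hf.1
  have hLc : IsOpen Lᶜ := hL.isClosed.isOpen_compl
  refine ⟨g, h, ?_, ?_, hlim, hfgh⟩
  · have hUL : frontier U ⊆ Lᶜ := hU.frontier_eq ▸ fun z hz hzL => hz.2 (hLU hzL)
    exact MemAp.of_eqOn_add (by rwa [inter_comm, ← Set.sdiff_eq]) hLc hU hUL hh hg
      fun z _ => by rw [hfgh, add_comm]
  · have hLU' : frontier Lᶜ ⊆ U := frontier_compl L ▸ hL.isClosed.frontier_subset.trans hLU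
    exact MemAp.of_eqOn_add (by rwa [← Set.sdiff_eq]) hU hLc hLU' hg hh fun z _ => by rw [hfgh]

/-- Let `L ⊆ ℂ` be compact, `U ⊆ ℂ` open with `L ⊆ U`, `Ω = ℂ \ L`, and
`p ∈ {0,1,2,...} ∪ {∞}`. Then every `f ∈ A^p(Ω ∪ {∞})` is constant (i.e. `a_p(L)=0`)
iff every `f ∈ A^p(U \ L)` extends to some `F ∈ A^p(U)` with `F = f` on `U \ L`. -/
theorem apCapacity_zero_iff_extension
    (p : ℕ∞) (L : Set ℂ) (hL : IsCompact L) (U : Set ℂ) (hU : IsOpen U)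
    (hLU : L ⊆ U) :
    (∀ f : ℂ → ℂ, MemApInf p L f → ∃ c : ℂ, ∀ z ∈ Lᶜ, f z = c) ↔
    (∀ f : ℂ → ℂ, MemAp p (U \ L) f →
      ∃ F : ℂ → ℂ, MemAp p U F ∧ Set.EqOn F f (U \ L)) := by
  constructor
  · intro hconst f hf
    obtain ⟨g, h, hg, hh, hlim, rfl⟩ := hf.exists_decomposition hL hU hLU
    obtain ⟨c, hc⟩ := hconst h ⟨hh, 0, hlim⟩
    have hc0 : c = 0 := tendsto_nhds_unique (tendsto_const_nhds.congr'
      (EqOn.eventuallyEq_of_mem (fun z hz => (hc z hz).symm) hL.compl_mem_cocompact)) hlim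
    exact ⟨g, hg, fun z hz => by simp [hc z hz.2, hc0]⟩
  · rintro hext f ⟨hf, c, hc⟩
    obtain ⟨F, hF, hFf⟩ := hext f (hf.mono fun z hz => hz.2)
    exact ⟨c, fun z hz => eq_of_tendsto_of_eqOn_diff hL hU hLU hf.1 hc hF.1 hFf hz⟩
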